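/- For every integer l ≥ 2 there exists N = N(l) such that for all integers n > N, (a(n,l-2)/C(n-3,l-2))·(a(n,l)/C(n-3,l)) ≤ (a(n,l-1)/C(n-3,l-1))², where C(n-3,j) denotes the binomial coefficient. -/

import Mathlib

/-!
For fixed `l` and `n → ∞`, the sum defining `a n l` is dominated by its summand `k = l`, which is
`(l+1)^(l+n-1)/(l+1)!`. Indeed `C(n,k,i) = O(n^(i+1)) = O((n^2)^i)` for `i ≥ 1`, so the inner sum,
being the `x^(l-k)` coefficient of `exp (∑ C(n,k,i) x^i)`, is `O(n^(2(l-k)))`; this cannot make up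
for the factor `(k+1)^n` when `k < l`. Hence `a(n,l) / C(n-3,l) = Θ((l+1)^n / n^l)`. In the ratio of
the two sides of the inequality the powers of `n` cancel, and what is left decays exponentially
because `(l-1)(l+1) < l^2`.
-/

open Finset Real

/-- The constant `C(n,k,i)` from Aluffi–Marcolli–Nascimento. -/
noncomputable def Cnki (n k i : ℕ) : ℝ :=
  ((-1 : ℝ) ^ i * (2 * (k : ℝ) * i + n * i + k + n - 1) + (k : ℝ) - i) / (i * (i + 1))
    - (1 / ((i : ℝ) * (k + 1) ^ i)) * ∑ j ∈ Finset.range (k + n - 1), (j : ℝ) ^ i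

/-- The finite set of `m`-tuples of positive integers summing to `N`. -/
def posTuples (m N : ℕ) : Finset (Fin m → ℕ) :=
  (Fintype.piFinset fun _ => Finset.Icc 1 N).filter fun f => ∑ j, f j = N

/-- `a n l = rk H^{2l}(M̄_{0,n})`, via the Aluffi–Marcolli–Nascimento formula. -/
noncomputable def a (n l : ℕ) : ℝ :=
  ∑ k ∈ Finset.range (l + 1),
    ((k + 1 : ℝ) ^ (k + n - 1) / (Nat.factorial (k + 1) : ℝ)) *
      ∑ m ∈ Finset.range (l - k + 1),
        (1 / (Nat.factorial m : ℝ)) *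
          ∑ f ∈ posTuples m (l - k), ∏ j, Cnki n k (f j)

open Filter Asymptotics

lemma isLittleO_const_natCast (c : ℝ) :
    (fun _ : ℕ => c) =o[atTop] fun n : ℕ => (n : ℝ) :=
  (isLittleO_const_id_atTop c).comp_tendsto tendsto_natCast_atTop_atTop

lemma isBigO_affine_natCast (b c : ℝ) :
    (fun n : ℕ => b * n + c) =O[atTop] fun n : ℕ => (n : ℝ) :=
  ((isBigO_refl _ _).const_mul_left b).add (isLittleO_const_natCast c).isBigO

lemma isEquivalent_natCast_add_sub (k m : ℕ) :
    (fun n : ℕ => ((k + n - m : ℕ) : ℝ)) ~[atTop] fun n : ℕ => (n : ℝ) := by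
  refine IsEquivalent.congr_left
    (IsEquivalent.refl.add_isLittleO (isLittleO_const_natCast (k - m))) ?_
  filter_upwards [eventually_ge_atTop m] with n hn
  rw [Pi.add_apply, Nat.cast_sub (by omega), Nat.cast_add]
  ring

lemma isBigO_natCast_pow_of_le {d e : ℕ} (h : d ≤ e) :
    (fun n : ℕ => (n : ℝ) ^ d) =O[atTop] fun n : ℕ => (n : ℝ) ^ e := by
  refine IsBigO.pow_of_le_right ?_ h
  filter_upwards [eventually_ge_atTop 1] with n hn
  exact Nat.one_le_cast.mpr hn

lemma isTheta_choose_sub (m l : ℕ) :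
    (fun n : ℕ => ((n - m).choose l : ℝ)) =Θ[atTop] fun n : ℕ => (n : ℝ) ^ l := by
  have hcomp : (fun n : ℕ => ((n - m).choose l : ℝ)) =Θ[atTop]
      fun n : ℕ => ((n - m : ℕ) : ℝ) ^ l :=
    ⟨(isTheta_choose l).isBigO.comp_tendsto (tendsto_sub_atTop_nat m),
      (isTheta_choose l).symm.isBigO.comp_tendsto (tendsto_sub_atTop_nat m)⟩
  have hsub : (fun n : ℕ => ((n - m : ℕ) : ℝ)) =Θ[atTop] fun n : ℕ => (n : ℝ) := by
    simpa only [zero_add] using (isEquivalent_natCast_add_sub 0 m).isTheta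
  exact hcomp.trans (hsub.pow l)

lemma sum_range_natCast_pow_le (N i : ℕ) :
    ∑ j ∈ range N, (j : ℝ) ^ i ≤ (N : ℝ) ^ (i + 1) :=
  calc ∑ j ∈ range N, (j : ℝ) ^ i
      ≤ ∑ _j ∈ range N, (N : ℝ) ^ i := by
        gcongr with j hj
        exact (mem_range.mp hj).le
    _ = (N : ℝ) ^ (i + 1) := by
        rw [sum_const, card_range, nsmul_eq_mul, pow_succ']

lemma isBigO_sum_range_pow (k i : ℕ) :
    (fun n : ℕ => ∑ j ∈ range (k + n - 1), (j : ℝ) ^ i) =O[atTop]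
      fun n : ℕ => (n : ℝ) ^ (i + 1) := by
  refine .trans (.of_norm_le fun n => ?_) ((isEquivalent_natCast_add_sub k 1).isBigO.pow (i + 1))
  rw [Real.norm_of_nonneg (by positivity)]
  exact sum_range_natCast_pow_le _ i

lemma isTheta_pow_add_sub {x : ℝ} (hx : x ≠ 0) (k m : ℕ) :
    (fun n : ℕ => x ^ (k + n - m)) =Θ[atTop] fun n : ℕ => x ^ n := by
  have hc : x ^ k * (x ^ m)⁻¹ ≠ 0 := by positivity
  refine EventuallyEq.trans_isTheta ?_ (isTheta_rfl.const_mul_left hc)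
  filter_upwards [eventually_ge_atTop m] with n hn
  rw [pow_sub₀ x hx (by omega), pow_add]
  ring

lemma isLittleO_pow_div_pow_mul {x y z : ℝ} (hxz : 0 ≤ x * z) (hlt : x * z < y ^ 2)
    {d e f : ℕ} (hdf : d + f = e * 2) :
    (fun n : ℕ => x ^ n / (n : ℝ) ^ d * (z ^ n / (n : ℝ) ^ f)) =o[atTop]
      fun n : ℕ => (y ^ n / (n : ℝ) ^ e) ^ 2 := by
  have h := (isLittleO_pow_pow_of_lt_left hxz hlt).mul_isBigO
    (isBigO_refl (fun n : ℕ => ((n : ℝ) ^ (e * 2))⁻¹) atTop)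
  refine h.congr (fun n => ?_) fun n => ?_
  · rw [div_mul_div_comm, ← mul_pow, ← pow_add, hdf, div_eq_mul_inv]
  · rw [div_pow, pow_right_comm y n 2, ← pow_mul _ e, div_eq_mul_inv]

/-- The `r`-th coefficient of the power series `exp (∑_{i ≥ 1} c i x^i)`, in the expanded form in
which it occurs in `a`. -/
noncomputable def expCoeff (c : ℕ → ℝ) (r : ℕ) : ℝ :=
  ∑ m ∈ range (r + 1), (1 / (Nat.factorial m : ℝ)) * ∑ f ∈ posTuples m r, ∏ j, c (f j)

lemma expCoeff_zero (c : ℕ → ℝ) : expCoeff c 0 = 1 := by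
  simp [expCoeff, posTuples]

lemma isBigO_expCoeff {α : Type*} {𝓕 : Filter α} {c : α → ℕ → ℝ} {g : α → ℝ}
    (hc : ∀ i, 1 ≤ i → (fun x => c x i) =O[𝓕] fun x => g x ^ i) (r : ℕ) :
    (fun x => expCoeff (c x) r) =O[𝓕] fun x => g x ^ r := by
  refine .fun_sum fun m _ => .const_mul_left (.fun_sum fun f hf => ?_) _
  obtain ⟨hpos, hsum⟩ : (∀ j, 1 ≤ f j ∧ f j ≤ r) ∧ ∑ j, f j = r := by
    simpa [posTuples] using hf
  have hprod : (fun x => ∏ j, c x (f j)) =O[𝓕] fun x => ∏ j, g x ^ f j :=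
    .finsetProd fun j _ => hc (f j) (hpos j).1
  simpa only [prod_pow_eq_pow_sum, hsum] using hprod

lemma isBigO_Cnki (k i : ℕ) :
    (fun n => Cnki n k i) =O[atTop] fun n : ℕ => (n : ℝ) ^ (i + 1) := by
  have hlinear : (fun n : ℕ =>
      ((-1 : ℝ) ^ i * (2 * (k : ℝ) * i + n * i + k + n - 1) + (k : ℝ) - i) / (i * (i + 1)))
        =O[atTop] fun n : ℕ => (n : ℝ) ^ 1 := by
    simp only [pow_one]
    refine (isBigO_affine_natCast ((-1) ^ i * (i + 1) / (i * (i + 1)))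
      (((-1) ^ i * (2 * k * i + k - 1) + k - i) / (i * (i + 1)))).congr_left fun n => ?_
    ring
  exact (hlinear.trans (isBigO_natCast_pow_of_le (by omega))).sub
    ((isBigO_sum_range_pow k i).const_mul_left _)

lemma isBigO_expCoeff_Cnki (k r : ℕ) :
    (fun n => expCoeff (Cnki n k) r) =O[atTop] fun n : ℕ => (n : ℝ) ^ (2 * r) := by
  simp only [pow_mul]
  refine isBigO_expCoeff (fun i hi => ?_) r
  simp only [← pow_mul]
  exact (isBigO_Cnki k i).trans (isBigO_natCast_pow_of_le (by omega))

/-- The prefactor `(k+1)^(k+n-1)/(k+1)!` of the `k`-th summand of `a n l`; for `k = l` it is the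
whole summand, and it is the leading term of `a n l`. -/
noncomputable def leadingTerm (n k : ℕ) : ℝ :=
  (k + 1 : ℝ) ^ (k + n - 1) / (Nat.factorial (k + 1) : ℝ)

lemma isTheta_leadingTerm (k : ℕ) :
    (fun n => leadingTerm n k) =Θ[atTop] fun n : ℕ => (k + 1 : ℝ) ^ n := by
  simp only [leadingTerm, div_eq_inv_mul]
  exact (isTheta_pow_add_sub (by positivity) k 1).const_mul_left (by positivity)

lemma a_eq_sum_add_leadingTerm (n l : ℕ) :
    a n l = ∑ k ∈ range l, leadingTerm n k * expCoeff (Cnki n k) (l - k) + leadingTerm n l := by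
  have h : a n l = ∑ k ∈ range (l + 1), leadingTerm n k * expCoeff (Cnki n k) (l - k) := rfl
  rw [h, sum_range_succ, Nat.sub_self, expCoeff_zero, mul_one]

lemma isLittleO_leadingTerm_mul_expCoeff {k l : ℕ} (hkl : k < l) (r : ℕ) :
    (fun n => leadingTerm n k * expCoeff (Cnki n k) r) =o[atTop] fun n => leadingTerm n l := by
  have hbase : ‖(k + 1 : ℝ)‖ < l + 1 := by
    rw [Real.norm_of_nonneg (by positivity)]
    exact_mod_cast Nat.succ_lt_succ hkl
  have hexp : (fun n : ℕ => (k + 1 : ℝ) ^ n * (n : ℝ) ^ (2 * r)) =o[atTop]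
      fun n : ℕ => (l + 1 : ℝ) ^ n := by
    simpa only [mul_comm] using
      isLittleO_pow_const_mul_const_pow_const_pow_of_norm_lt (2 * r) hbase
  exact (((isTheta_leadingTerm k).isBigO.mul (isBigO_expCoeff_Cnki k r)).trans_isLittleO
    hexp).trans_isTheta (isTheta_leadingTerm l).symm

theorem isEquivalent_a (l : ℕ) : (fun n => a n l) ~[atTop] fun n => leadingTerm n l := by
  simp only [a_eq_sum_add_leadingTerm]
  exact IsLittleO.add_isEquivalent
    (.fun_sum fun k hk => isLittleO_leadingTerm_mul_expCoeff (mem_range.mp hk) (l - k)) .refl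

theorem isTheta_a_div_choose (l : ℕ) :
    (fun n => a n l / ((n - 3).choose l : ℝ)) =Θ[atTop]
      fun n : ℕ => (l + 1 : ℝ) ^ n / (n : ℝ) ^ l :=
  ((isEquivalent_a l).isTheta.trans (isTheta_leadingTerm l)).div (isTheta_choose_sub 3 l)

theorem isLittleO_a_div_choose_mul (l : ℕ) :
    (fun n => a n l / ((n - 3).choose l : ℝ) * (a n (l + 2) / ((n - 3).choose (l + 2) : ℝ)))
      =o[atTop] fun n => (a n (l + 1) / ((n - 3).choose (l + 1) : ℝ)) ^ 2 := by
  have hbase : (l + 1 : ℝ) * ((l + 2 : ℕ) + 1) < ((l + 1 : ℕ) + 1) ^ 2 := by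
    push_cast
    linarith
  exact (((isTheta_a_div_choose l).mul (isTheta_a_div_choose (l + 2))).trans_isLittleO
    (isLittleO_pow_div_pow_mul (by positivity) hbase (by ring))).trans_isTheta
      ((isTheta_a_div_choose (l + 1)).pow 2).symm

/-- **Theorem (Aluffi–Chen–Marcolli asymptotic log-concavity).** For every `l ≥ 2`
there exists `N = N(l)` such that for all `n > N`,
`(a(n,l-2)/C(n-3,l-2)) · (a(n,l)/C(n-3,l)) ≤ (a(n,l-1)/C(n-3,l-1))²`. -/
theorem stmt2 (l : ℕ) (hl : 2 ≤ l) :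
    ∃ N : ℕ, ∀ n : ℕ, N < n →
      (a n (l - 2) / ((n - 3).choose (l - 2) : ℝ)) *
          (a n l / ((n - 3).choose l : ℝ)) ≤
        (a n (l - 1) / ((n - 3).choose (l - 1) : ℝ)) ^ 2 := by
  obtain ⟨p, rfl⟩ := Nat.exists_eq_add_of_le' hl
  obtain ⟨N, hN⟩ := eventually_atTop.mp (isLittleO_a_div_choose_mul p).eventuallyLE
  exact ⟨N, fun n hn => (Real.le_norm_self _).trans <|
    (hN n hn.le).trans_eq (Real.norm_of_nonneg (sq_nonneg _))⟩
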